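/- arXiv:0712.3486 — 4 statements merged into one kernel-verified Lean document; each statement's English description precedes it below -/
import Mathlib

section
/- Let N ≥ 1 be an integer and f(z) = ∑_{k≥1} a_k z^{n_k} ∈ H² a lacunary series, where (n_k)_{k≥1} is a Hadamard lacunary sequence and a_k ≠ 0 for every k ≥ 1. Then f is cyclic for S*^N on H² if and only if for every m ≥ 0 and every i ∈ {0, 1, …, N−1} there exists k with n_k ≥ m and n_k ≡ i (mod N). -/
open scoped InnerProductSpace ENNReal
noncomputable section

/-- The Hardy space `H²(𝔻, X)` identified with `ℓ²(ℕ, X)`. -/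
abbrev H2 (X : Type*) [NormedAddCommGroup X] [InnerProductSpace ℂ X] : Type _ :=
  lp (fun _ : ℕ => X) 2

variable {X : Type*} [NormedAddCommGroup X] [InnerProductSpace ℂ X]

/-- The backward shift `S*` on `H²(𝔻, X)`. -/
def bshift (f : H2 X) : H2 X :=
  ⟨fun n => f (n + 1), by
    have h : Summable fun n : ℕ => ‖f n‖ ^ (2 : ℝ≥0∞).toReal :=
      (memℓp_gen_iff (by norm_num)).1 (lp.memℓp f)
    exact memℓp_gen ((summable_nat_add_iff 1).2 h)⟩

/-- `E_F`: the smallest closed `S*`-invariant subspace containing the family `F`. -/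
def EF (F : Set (H2 X)) : Submodule ℂ (H2 X) :=
  (Submodule.span ℂ {g : H2 X | ∃ f ∈ F, ∃ n : ℕ, g = bshift^[n] f}).topologicalClosure

/-- `E_f` for a single function. -/
def Ef (f : H2 X) : Submodule ℂ (H2 X) :=
  EF {f}

/-- `X_*(F) = ⋂_m closed-span {f̂(k) : k ≥ m, f ∈ F}`. -/
def XstarF (F : Set (H2 X)) : Submodule ℂ X :=
  ⨅ m : ℕ, (Submodule.span ℂ {x : X | ∃ f ∈ F, ∃ k ≥ m, x = f k}).topologicalClosure

def Xstar (f : H2 X) : Submodule ℂ X := XstarF {f}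

/-- `P : X → X` is an orthogonal projection: idempotent and self-adjoint. -/
def IsOrthoProj {Y : Type*} [NormedAddCommGroup Y] [InnerProductSpace ℂ Y]
    (P : Y →L[ℂ] Y) : Prop :=
  (∀ x, P (P x) = P x) ∧ ∀ x y, ⟪P x, y⟫_ℂ = ⟪x, P y⟫_ℂ

/-- A sequence in a Hilbert space is completely relatively compact if for every orthogonal
projection `P` the normalized sequence `{P aₖ / ‖P aₖ‖ : P aₖ ≠ 0}` is relatively compact. -/
def CRC {Y : Type*} [NormedAddCommGroup Y] [InnerProductSpace ℂ Y] (a : ℕ → Y) : Prop :=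
  ∀ P : Y →L[ℂ] Y, IsOrthoProj P →
    IsCompact (closure {v : Y | ∃ k, P (a k) ≠ 0 ∧ v = ‖P (a k)‖⁻¹ • P (a k)})

/-- A subset of `ℕ` is Hadamard lacunary. -/
def HadLac (Λ : Set ℕ) : Prop :=
  ∃ d : ℝ, 1 < d ∧ ∀ m ∈ Λ, ∀ n ∈ Λ, m < n → d * m ≤ n

/-- The Fourier spectrum. -/
def spec (f : H2 X) : Set ℕ := {k : ℕ | f k ≠ 0}

/-- `H²(𝔻, Y)` for a subspace `Y ⊆ X`, as a submodule of `H²(𝔻, X)`. -/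
def H2sub (Y : Submodule ℂ X) : Submodule ℂ (H2 X) where
  carrier := {g : H2 X | ∀ n, g n ∈ Y}
  add_mem' := by
    intro a b ha hb n
    have : (↑(a + b) : ∀ _ : ℕ, X) n = a n + b n := by
      rw [lp.coeFn_add]; rfl
    rw [this]
    exact Y.add_mem (ha n) (hb n)
  zero_mem' := by
    intro n
    have : (↑(0 : H2 X) : ∀ _ : ℕ, X) n = 0 := by rw [lp.coeFn_zero]; rfl
    rw [this]
    exact Y.zero_mem
  smul_mem' := by
    intro c a ha n
    have : (↑(c • a) : ∀ _ : ℕ, X) n = c • a n := by rw [lp.coeFn_smul]; rfl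
    rw [this]
    exact Y.smul_mem c (ha n)

/-- A polynomial: finitely many nonzero Taylor coefficients. -/
def PolyH2 (f : H2 X) : Prop := {n : ℕ | f n ≠ 0}.Finite


/-- `X_∞(f)`: the closed span of all closed subspaces `Y ⊆ X` with
`H²(𝔻, Y) ⊆ E_{S*^N f}` for every `N ≥ 0`. -/
def Xinf (f : H2 X) : Submodule ℂ X :=
  (Submodule.span ℂ {x : X | ∃ Y : Submodule ℂ X, IsClosed (Y : Set X) ∧
      (∀ N : ℕ, H2sub Y ≤ Ef (bshift^[N] f)) ∧ x ∈ Y}).topologicalClosure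

/-- The smallest closed `S*^N`-invariant subspace containing `f`;
`f` is cyclic for `S*^N` iff this equals `⊤`. -/
def EfPow (f : H2 X) (N : ℕ) : Submodule ℂ (H2 X) :=
  (Submodule.span ℂ {g : H2 X | ∃ k : ℕ, g = bshift^[N * k] f}).topologicalClosure


open Filter in
theorem aux_not_summable (b : ℕ → ℝ) (hb : ∀ j, 0 ≤ b j) (hs : Summable b)
    (hinf : ∀ m, ∃ j, m ≤ j ∧ 0 < b j) :
    ¬ Summable (fun j => b j / ∑' s, b (j + 1 + s)) := by
  intro hsum
  have hsh : ∀ M, Summable fun s => b (M + s) := fun M => by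
    simpa only [add_comm M] using (summable_nat_add_iff M).2 hs
  have hRpos : ∀ j, 0 < ∑' s, b (j + 1 + s) := by
    intro j
    obtain ⟨k, hk, hk'⟩ := hinf (j + 1)
    refine (hsh (j+1)).tsum_pos (fun s => hb _) (k - (j+1)) ?_
    rwa [Nat.add_sub_cancel' hk]
  have hanti : ∀ j k, (∑' s, b (j + 1 + k + 1 + s)) ≤ ∑' s, b (j + 1 + s) := by
    intro j k
    have := (hsh (j+1)).sum_add_tsum_nat_add (k+1)
    have h0 : 0 ≤ ∑ i ∈ Finset.range (k+1), b (j + 1 + i) := Finset.sum_nonneg fun i _ => hb _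
    have e : (∑' s, b (j + 1 + (s + (k+1)))) = ∑' s, b (j + 1 + k + 1 + s) :=
      tsum_congr fun s => by congr 1; ring
    linarith
  have ht := tendsto_sum_nat_add (fun j => b j / ∑' s, b (j + 1 + s))
  have hlt := (ht.eventually (gt_mem_nhds (zero_lt_one (α := ℝ))))
  obtain ⟨M, hM⟩ := eventually_atTop.1 hlt
  have h1 := hM (M + 1) (by omega)
  have h2 : (∑' s, b (M + 1 + s) / ∑' s, b (M + 1 + s)) = 1 := by
    rw [tsum_div_const]; exact div_self (hRpos M).ne'
  have h3 : (∑' s, b (M + 1 + s) / ∑' s, b (M + 1 + s)) ≤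
      ∑' k, b (k + (M + 1)) / ∑' s, b (k + (M + 1) + 1 + s) := by
    refine Summable.tsum_le_tsum ?_ ((hsh (M+1)).div_const _)
      ((summable_nat_add_iff (M+1)).2 hsum)
    intro k
    rw [add_comm k (M+1)]
    exact div_le_div_of_nonneg_left (hb _) (hRpos _) (hanti M k)
  linarith

open Filter in
theorem aux_cs (u v : ℕ → ℝ) (hu : Summable fun s => u s ^ 2) (hv : Summable fun s => v s ^ 2) :
    Summable (fun s => u s * v s) ∧
    (∑' s, u s * v s) ^ 2 ≤ (∑' s, u s ^ 2) * ∑' s, v s ^ 2 := by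
  have h : Summable (fun s => u s * v s) := by
    refine Summable.of_norm_bounded (hu.add hv) fun s => ?_
    rw [Real.norm_eq_abs, abs_le]
    constructor <;> nlinarith [sq_nonneg (u s + v s), sq_nonneg (u s - v s), sq_nonneg (u s), sq_nonneg (v s)]
  refine ⟨h, le_of_tendsto (h.hasSum.pow 2 |> fun h => h) (Eventually.of_forall fun t => ?_)⟩
  refine (Finset.sum_mul_sq_le_sq_mul_sq t u v).trans ?_
  exact mul_le_mul (hu.sum_le_tsum t fun _ _ => sq_nonneg _) (hv.sum_le_tsum t fun _ _ => sq_nonneg _)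
    (Finset.sum_nonneg fun _ _ => sq_nonneg _) (tsum_nonneg fun _ => sq_nonneg _)

theorem aux_pow (n : ℕ → ℕ) (d : ℝ) (hd : 1 < d)
    (hlac : ∀ k, d * n k ≤ n (k + 1)) (k r : ℕ) : d ^ r * n k ≤ n (k + r) := by
  induction r with
  | zero => simp
  | succ r ih =>
    calc d ^ (r+1) * n k = d * (d ^ r * n k) := by ring
      _ ≤ d * n (k + r) := by gcongr
      _ ≤ _ := hlac (k + r)

theorem aux_count (n : ℕ → ℕ) (d : ℝ) (hd : 1 < d) (hmono : StrictMono n)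
    (hlac : ∀ k, d * n k ≤ n (k + 1)) :
    ∃ C : ℕ, ∀ s : ℕ, 0 < s → ∀ t : Finset ℕ,
      (∀ j ∈ t, j ∈ Set.range n ∧ j + s ∈ Set.range n) → t.card ≤ C := by
  have hd0 : 0 < d - 1 := by linarith
  obtain ⟨r, hr⟩ := pow_unbounded_of_one_lt (d / (d - 1)) hd
  refine ⟨r, fun s hs t ht => ?_⟩
  have hs' : (0 : ℝ) < s := by exact_mod_cast hs
  rcases t.eq_empty_or_nonempty with rfl | hne
  · simp
  have hch : ∀ j ∈ t, ∃ l, n l = j + s := fun j hj => (ht j hj).2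
  choose! l hl using hch
  have hup : ∀ j ∈ t, ((j : ℝ) + s) * (d - 1) ≤ s * d := by
    intro j hj
    obtain ⟨k, hk⟩ := (ht j hj).1
    have hkl : k < l j := hmono.lt_iff_lt.1 (by rw [hl j hj, hk]; omega)
    have h1 : n (k+1) ≤ j + s := by rw [← hl j hj]; exact hmono.monotone hkl
    have h2 := hlac k
    rw [hk] at h2
    have h1' : (n (k+1) : ℝ) ≤ j + s := by exact_mod_cast h1
    nlinarith
  have hinj : Set.InjOn l t := by
    intro a ha b hb hab
    have := hl a ha; have h2 := hl b hb
    rw [hab] at this; omega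
  rw [← Finset.card_image_of_injOn hinj]
  have hne' : (t.image l).Nonempty := hne.image l
  set k0 := (t.image l).min' hne' with hk0
  have hk0m : k0 ∈ t.image l := Finset.min'_mem _ _
  have hsub : t.image l ⊆ Finset.Ico k0 (k0 + r) := by
    intro x hx
    rw [Finset.mem_Ico]
    refine ⟨Finset.min'_le _ _ hx, ?_⟩
    by_contra hcon
    push Not at hcon
    obtain ⟨j, hj, rfl⟩ := Finset.mem_image.1 hx
    obtain ⟨i, hi, hi2⟩ := Finset.mem_image.1 hk0m
    have h1 := aux_pow n d hd hlac k0 r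
    have h2 : n (k0 + r) ≤ n (l j) := hmono.monotone hcon
    rw [hl j hj] at h2
    have h2' : (n (k0 + r) : ℝ) ≤ j + s := by exact_mod_cast h2
    have h3 : s ≤ n k0 := by rw [← hi2, hl i hi]; omega
    have h3' : (s : ℝ) ≤ n k0 := by exact_mod_cast h3
    have h4 := hup j hj
    rw [div_lt_iff₀ hd0] at hr
    have h5 : d ^ r * s ≤ d ^ r * n k0 := by gcongr
    have h6 : d ^ r * s ≤ j + s := by linarith
    nlinarith
  simpa using Finset.card_le_card hsub

theorem aux_gap (n : ℕ → ℕ) (d : ℝ) (hd : 1 < d) (hmono : StrictMono n)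
    (hlac : ∀ k, d * n k ≤ n (k + 1)) (p : ℕ) :
    ∃ M, p ≤ M ∧ ∀ j ∈ Set.range n, M ≤ j → ∀ i ∈ Set.range n, i < j → i + p < j := by
  obtain ⟨M, hM⟩ := exists_nat_gt (p * d / (d - 1))
  have hd0 : 0 < d - 1 := by linarith
  refine ⟨max M p, le_max_right _ _, ?_⟩
  rintro _ ⟨k, rfl⟩ hk _ ⟨i, rfl⟩ hi
  have hik : i + 1 ≤ k := hmono.lt_iff_lt.1 hi
  have h1 : n (i+1) ≤ n k := hmono.monotone hik
  have h1' : (n (i+1) : ℝ) ≤ n k := by exact_mod_cast h1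
  have h2 := hlac i
  have h3 : (M : ℝ) ≤ n k := by exact_mod_cast (le_max_left _ _).trans hk
  rw [div_lt_iff₀ hd0] at hM
  have h4 : (p : ℝ) * d < n k * (d - 1) := by nlinarith
  have : ((n i : ℝ) + p) * d < n k * d := by nlinarith
  have := lt_of_mul_lt_mul_right this (by linarith)
  exact_mod_cast this

theorem bshift_iter (f : H2 ℂ) (k j : ℕ) : (bshift^[k] f) j = f (j + k) := by
  induction k generalizing j with
  | zero => rfl
  | succ k ih =>
    rw [Function.iterate_succ_apply']
    change (bshift^[k] f) (j + 1) = _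
    rw [ih, add_assoc, add_comm 1 k]

theorem h2_summable (f : H2 ℂ) : Summable fun n : ℕ => ‖f n‖ ^ 2 := by
  have h : Summable fun n : ℕ => ‖f n‖ ^ (2 : ℝ≥0∞).toReal :=
      (memℓp_gen_iff (by norm_num)).1 (lp.memℓp f)
  simpa using h

/-- Core inequality. -/
theorem aux_core (N : ℕ)
    (f g : H2 ℂ) (L : Set ℕ) (hspec : spec f = L)
    (hg : ∀ k : ℕ, HasSum (fun j => g j * (starRingEnd ℂ) (f (j + N * k))) 0)
    (T : Set ℕ) (hT : ∀ q, q % N ∈ T → g q = 0)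
    (p j0 : ℕ) (hp : p ≤ j0) (hmod : j0 % N = p % N)
    (hgap : ∀ i ∈ L, i < j0 → i + p < j0) (c : ℕ → ℝ)
    (hc1 : ∀ j, j % N ∉ T → c j = ‖f j‖) (hc0 : ∀ j, j % N ∈ T → c j = 0)
    (v : ℕ → ℝ) (hv1 : ∀ s, j0 + 1 + s ∈ L → v s = ‖g (p + 1 + s)‖)
    (hv0 : ∀ s, j0 + 1 + s ∉ L → v s = 0) :
    ‖f j0‖ ^ 2 * ‖g p‖ ^ 2 ≤ (∑' s, c (j0 + 1 + s) ^ 2) * ∑' s, v s ^ 2 := by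
  have hfz : ∀ i, i ∉ L → f i = 0 := by
    intro i hi
    rw [← hspec] at hi
    simpa [spec] using hi
  obtain ⟨k, hk⟩ : ∃ k, j0 = p + N * k := by
    obtain ⟨k, hk⟩ := (Nat.modEq_iff_dvd' hp).1 hmod.symm
    exact ⟨k, by omega⟩
  have hu : Summable fun s => c (j0 + 1 + s) ^ 2 := by
    have h1 : Summable fun s => ‖f (j0 + 1 + s)‖ ^ 2 := by
      simpa only [add_comm (j0+1)] using (summable_nat_add_iff (j0+1)).2 (h2_summable f)
    refine Summable.of_nonneg_of_le (fun s => sq_nonneg _) (fun s => ?_) h1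
    by_cases h : (j0 + 1 + s) % N ∈ T
    · rw [hc0 _ h, zero_pow two_ne_zero]; exact sq_nonneg _
    · rw [hc1 _ h]
  have hv : Summable fun s => v s ^ 2 := by
    have h1 : Summable fun s => ‖g (p + 1 + s)‖ ^ 2 := by
      simpa only [add_comm (p+1)] using (summable_nat_add_iff (p+1)).2 (h2_summable g)
    refine Summable.of_nonneg_of_le (fun s => sq_nonneg _) (fun s => ?_) h1
    by_cases h : j0 + 1 + s ∈ L
    · rw [hv1 _ h]
    · rw [hv0 _ h, zero_pow two_ne_zero]; exact sq_nonneg _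
  obtain ⟨hsm, hcs⟩ := aux_cs _ _ hu hv
  have h0 := hg k
  have h1 := h0.summable.sum_add_tsum_nat_add (p + 1)
  rw [h0.tsum_eq, Finset.sum_range_succ, Finset.sum_eq_zero, zero_add] at h1
  · have h2 : g p * (starRingEnd ℂ) (f (p + N * k)) =
        - ∑' i, g (i + (p + 1)) * (starRingEnd ℂ) (f (i + (p + 1) + N * k)) :=
      eq_neg_of_add_eq_zero_left h1
    have h3 : ‖g p‖ * ‖f j0‖ ≤ ∑' s, c (j0 + 1 + s) * v s := by
      have h4 := congrArg norm h2
      rw [norm_neg, norm_mul, RCLike.norm_conj, ← hk] at h4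
      rw [h4]
      refine tsum_of_norm_bounded hsm.hasSum fun s => ?_
      have e1 : s + (p + 1) + N * k = j0 + 1 + s := by omega
      have e2 : s + (p + 1) = p + 1 + s := by omega
      rw [e1, e2, norm_mul, RCLike.norm_conj]
      by_cases hL : j0 + 1 + s ∈ L
      · rw [hv1 _ hL]
        by_cases h : (j0 + 1 + s) % N ∈ T
        · have : g (p + 1 + s) = 0 := by
            apply hT
            have : (j0 + 1 + s) % N = (p + 1 + s) % N := by
              rw [hk, show p + N * k + 1 + s = p + 1 + s + N * k by ring, Nat.add_mul_mod_self_left]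
            rwa [← this]
          simp [this]
        · rw [hc1 _ h, mul_comm]
      · rw [hfz _ hL, hv0 _ hL]; simp
    calc ‖f j0‖ ^ 2 * ‖g p‖ ^ 2 = (‖g p‖ * ‖f j0‖) ^ 2 := by ring
      _ ≤ (∑' s, c (j0 + 1 + s) * v s) ^ 2 := by gcongr
      _ ≤ _ := hcs
  · intro i hi
    rw [Finset.mem_range] at hi
    have : f (i + N * k) = 0 := by
      apply hfz
      intro hL
      have := hgap _ hL (by omega)
      omega
    rw [this]; simp

theorem aux_bound (N : ℕ)
    (n : ℕ → ℕ) (d : ℝ) (hd : 1 < d) (hmono : StrictMono n)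
    (hlac : ∀ k, d * n k ≤ n (k + 1))
    (f g : H2 ℂ) (hspec : spec f = Set.range n)
    (hg : ∀ k : ℕ, HasSum (fun j => g j * (starRingEnd ℂ) (f (j + N * k))) 0)
    (T : Set ℕ) (hT : ∀ q, q % N ∈ T → g q = 0)
    (c : ℕ → ℝ)
    (hc1 : ∀ j, j % N ∉ T → c j = ‖f j‖) (hc0 : ∀ j, j % N ∈ T → c j = 0)
    (hR : ∀ j, 0 < ∑' s, c (j + 1 + s) ^ 2) (p : ℕ) (hgp : g p ≠ 0) :
    Summable (fun j => if j % N = p % N then c j ^ 2 / ∑' s, c (j + 1 + s) ^ 2 else 0) := by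
  classical
  obtain ⟨M, hpM, hM⟩ := aux_gap n d hd hmono hlac p
  obtain ⟨C, hC⟩ := aux_count n d hd hmono hlac
  have hpT : p % N ∉ T := fun h => hgp (hT p h)
  have hgpos : 0 < ‖g p‖ ^ 2 := by positivity
  have hfz : ∀ i, i ∉ Set.range n → f i = 0 := by
    intro i hi
    rw [← hspec] at hi
    simpa [spec] using hi
  rw [← summable_nat_add_iff M]
  have hgs : Summable fun s => ‖g (p + 1 + s)‖ ^ 2 := by
    simpa only [add_comm (p+1)] using (summable_nat_add_iff (p+1)).2 (h2_summable g)
  let w : ℕ → ℕ → ℝ := fun j s =>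
    if j ∈ Set.range n ∧ j + 1 + s ∈ Set.range n then ‖g (p + 1 + s)‖ ^ 2 else 0
  have hw0 : ∀ j s, 0 ≤ w j s := fun j s => by dsimp only [w]; split_ifs <;> positivity
  have hws : ∀ j, Summable (w j) := fun j => by
    refine Summable.of_nonneg_of_le (hw0 j) (fun s => ?_) hgs
    dsimp only [w]; split_ifs
    · exact le_rfl
    · positivity
  have key : ∀ j, M ≤ j → (if j % N = p % N then c j ^ 2 / ∑' s, c (j + 1 + s) ^ 2 else 0)
      ≤ (∑' s, w j s) / ‖g p‖ ^ 2 := by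
    intro j hj
    have hnn : 0 ≤ (∑' s, w j s) / ‖g p‖ ^ 2 := div_nonneg (tsum_nonneg (hw0 j)) hgpos.le
    split_ifs with hmod
    · by_cases hjL : j ∈ Set.range n
      · have := aux_core N f g _ hspec hg T hT p j (hpM.trans hj) hmod
          (hM j hjL hj) c hc1 hc0
          (fun s => if j + 1 + s ∈ Set.range n then ‖g (p + 1 + s)‖ else 0)
          (fun s hs => if_pos hs) (fun s hs => if_neg hs)
        rw [div_le_div_iff₀ (hR j) hgpos, hc1 j (by rwa [hmod])]
        refine this.trans_eq ?_
        rw [mul_comm]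
        congr 1
        refine tsum_congr fun s => ?_
        dsimp only [w]
        by_cases h : j + 1 + s ∈ Set.range n
        · rw [if_pos h, if_pos ⟨hjL, h⟩]
        · rw [if_neg h, if_neg (fun h' => h h'.2)]; simp
      · rw [hc1 j (by rwa [hmod]), hfz j hjL]
        simpa using hnn
    · exact hnn
  refine summable_of_sum_le (c := (∑' s, C * ‖g (p + 1 + s)‖ ^ 2) / ‖g p‖ ^ 2) ?_ ?_
  · intro j
    dsimp only
    split_ifs
    · exact div_nonneg (sq_nonneg _) (hR _).le
    · exact le_rfl
  · intro t
    calc _ ≤ ∑ j ∈ t, (∑' s, w (j + M) s) / ‖g p‖ ^ 2 :=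
          Finset.sum_le_sum fun j _ => key (j + M) (by omega)
      _ = (∑' s, ∑ j ∈ t, w (j + M) s) / ‖g p‖ ^ 2 := by
          rw [← Finset.sum_div, Summable.tsum_finsetSum fun j _ => hws _]
      _ ≤ _ := by
          gcongr with s
          · exact summable_sum fun j _ => hws _
          · exact hgs.mul_left _
          dsimp only [w]
          rw [← Finset.sum_filter, Finset.sum_const, nsmul_eq_mul]
          gcongr
          rw [← Finset.card_map (addRightEmbedding M)]
          refine hC (s + 1) (by omega) _ ?_
          intro j hj
          obtain ⟨i, hi, rfl⟩ := Finset.mem_map.1 hj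
          have := (Finset.mem_filter.1 hi).2
          refine ⟨this.1, ?_⟩
          have h2 := this.2
          rwa [show i + M + 1 + s = i + M + (s + 1) by ring] at h2

/-- A scalar lacunary series with all coefficients nonzero is cyclic for `S*^N` iff beyond any
`m` the spectrum meets every residue class modulo `N`. -/
theorem scalar_lacunary_cyclic_pow_iff
    (N : ℕ) (hN : 1 ≤ N)
    (n : ℕ → ℕ) (d : ℝ) (hd : 1 < d) (hmono : StrictMono n)
    (hlac : ∀ k, d * n k ≤ n (k + 1))
    (f : H2 ℂ) (hspec : spec f = Set.range n) :
    EfPow f N = ⊤ ↔ ∀ m : ℕ, ∀ i < N, ∃ k : ℕ, m ≤ n k ∧ n k % N = i := by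
  classical
  rw [EfPow, Submodule.topologicalClosure_eq_top_iff]
  constructor
  · intro h m i hi
    by_contra hcon
    push Not at hcon
    have hmem : (lp.single 2 (N * m + i) (1 : ℂ) : H2 ℂ) ∈
        (Submodule.span ℂ {g : H2 ℂ | ∃ k : ℕ, g = bshift^[N * k] f})ᗮ := by
      rw [Submodule.mem_orthogonal]
      intro u hu
      induction hu using Submodule.span_induction with
      | mem x hx =>
        obtain ⟨k, rfl⟩ := hx
        rw [lp.inner_single_right, bshift_iter]
        have : f (N * m + i + N * k) = 0 := by
          by_contra hne
          have hmem : N * m + i + N * k ∈ spec f := hne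
          rw [hspec] at hmem
          obtain ⟨l, hl⟩ := hmem
          refine hcon l ?_ ?_
          · rw [hl]; nlinarith
          · rw [hl, show N * m + i + N * k = i + N * (m + k) by ring,
              Nat.add_mul_mod_self_left, Nat.mod_eq_of_lt hi]
        rw [this, inner_zero_left]
      | zero => exact inner_zero_left _
      | add x y _ _ hx hy => rw [inner_add_left, hx, hy, add_zero]
      | smul a x _ hx => rw [inner_smul_left, hx, mul_zero]
    rw [h, Submodule.mem_bot] at hmem
    have := congrArg (fun F : H2 ℂ => F (N * m + i)) hmem
    simp at this
  · intro h
    rw [Submodule.eq_bot_iff]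
    intro g hgm
    have hg : ∀ k : ℕ, HasSum (fun j => g j * (starRingEnd ℂ) (f (j + N * k))) 0 := by
      intro k
      have h1 := (Submodule.mem_orthogonal _ _).1 hgm (bshift^[N * k] f)
        (Submodule.subset_span ⟨k, rfl⟩)
      have h2 := lp.hasSum_inner (𝕜 := ℂ) (bshift^[N * k] f) g
      rw [h1] at h2
      have e : (fun j => g j * (starRingEnd ℂ) (f (j + N * k))) =
          fun j => ⟪(bshift^[N * k] f) j, g j⟫_ℂ := by
        funext j
        rw [bshift_iter, RCLike.inner_apply]
      rw [e]
      exact h2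
    let T : Set ℕ := {i | ∀ q, q % N = i → g q = 0}
    have hT : ∀ q, q % N ∈ T → g q = 0 := fun q hq => hq q rfl
    by_contra hg0
    obtain ⟨q, hq⟩ : ∃ q, g q ≠ 0 := by
      by_contra hc
      push Not at hc
      exact hg0 (lp.ext (funext fun q => hc q))
    have hqT : q % N ∉ T := fun h => hq (hT q h)
    let c : ℕ → ℝ := fun j => if j % N ∈ T then 0 else ‖f j‖
    have hc1 : ∀ j, j % N ∉ T → c j = ‖f j‖ := fun j hj => if_neg hj
    have hc0 : ∀ j, j % N ∈ T → c j = 0 := fun j hj => if_pos hj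
    have hcs : Summable fun j => c j ^ 2 := by
      refine Summable.of_nonneg_of_le (fun s => sq_nonneg _) (fun s => ?_) (h2_summable f)
      by_cases h : s % N ∈ T
      · rw [hc0 _ h, zero_pow two_ne_zero]; exact sq_nonneg _
      · rw [hc1 _ h]
    have hinf : ∀ m, ∃ j, m ≤ j ∧ 0 < c j ^ 2 := by
      intro m
      obtain ⟨k, hk, hk2⟩ := h m (q % N) (Nat.mod_lt _ hN)
      refine ⟨n k, hk, ?_⟩
      rw [hc1 _ (by rwa [hk2])]
      have : n k ∈ spec f := by rw [hspec]; exact ⟨k, rfl⟩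
      have : f (n k) ≠ 0 := this
      positivity
    have hR : ∀ j, 0 < ∑' s, c (j + 1 + s) ^ 2 := by
      intro j
      obtain ⟨k, hk, hk'⟩ := hinf (j + 1)
      have hsh : Summable fun s => c (j + 1 + s) ^ 2 := by
        simpa only [add_comm (j+1)] using (summable_nat_add_iff (j+1)).2 hcs
      refine hsh.tsum_pos (fun s => sq_nonneg _) (k - (j+1)) ?_
      rwa [Nat.add_sub_cancel' hk]
    refine aux_not_summable (fun j => c j ^ 2) (fun j => sq_nonneg _) hcs hinf ?_
    have hi : ∀ i ∈ Finset.range N, Summable (fun j => if j % N = i then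
        c j ^ 2 / ∑' s, c (j + 1 + s) ^ 2 else 0) := by
      intro i _
      by_cases hiT : i ∈ T
      · refine summable_zero.congr fun j => ?_
        split_ifs with hj
        · rw [hc0 j (by rwa [hj])]; simp
        · rfl
      · have : ∃ p, p % N = i ∧ g p ≠ 0 := by
          by_contra hcc
          push Not at hcc
          exact hiT hcc
        obtain ⟨p, rfl, hgp⟩ := this
        exact aux_bound N n d hd hmono hlac f g hspec hg T hT c hc1 hc0 hR p hgp
    refine (summable_sum hi).congr fun j => ?_
    rw [Finset.sum_ite_eq, if_pos (Finset.mem_range.2 (Nat.mod_lt _ hN))]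

end
end

section
/- Let A ⊆ ℕ∖{0} with 1 ∈ A. The following are equivalent: (i) whenever N ∈ A and m divides N (m ≥ 1), then m ∈ A; (ii) there exists f ∈ H² such that A = A(f), where A(f) = {N ≥ 1 : f is cyclic for S*^N}. -/
open scoped InnerProductSpace ENNReal
noncomputable section

variable {X : Type*} [NormedAddCommGroup X] [InnerProductSpace ℂ X]

theorem bshift_iter_apply (f : H2 ℂ) (d n : ℕ) : (bshift^[d] f) n = f (n + d) := by
  induction d generalizing n with
  | zero => rfl
  | succ d ih =>
    rw [Function.iterate_succ_apply']
    change (bshift^[d] f) (n + 1) = _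
    rw [ih, show n + 1 + d = n + (d + 1) by omega]

theorem exists_step (A : Set ℕ) (hA : A ⊆ {N : ℕ | 1 ≤ N}) (h1 : 1 ∈ A)
    (hdiv : ∀ N ∈ A, ∀ m : ℕ, 1 ≤ m → m ∣ N → m ∈ A) (N c i b : ℕ) :
    ∃ n, b ≤ n ∧ (∀ M, M ∉ A → 1 ≤ M → M ≤ i → ¬ M ∣ n) ∧ (N ∈ A → n ≡ c [MOD N]) := by
  have main : ∀ N ∈ A, ∃ n, b ≤ n ∧ (∀ M, M ∉ A → 1 ≤ M → M ≤ i → ¬ M ∣ n) ∧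
      n ≡ c [MOD N] := by
    intro N hN
    have hN1 : 1 ≤ N := hA hN
    have hd : 0 < Nat.gcd c N := Nat.gcd_pos_of_pos_right _ hN1
    obtain ⟨c', N', hcop, hc, hN'⟩ := Nat.exists_coprime c N
    have hN'0 : N' ≠ 0 := by
      rintro rfl
      omega
    obtain ⟨p, hp, hpp, hpm⟩ := Nat.forall_exists_prime_gt_and_modEq (max b i) hN'0 hcop
    refine ⟨p * Nat.gcd c N, ?_, ?_, ?_⟩
    · have : p ≤ p * Nat.gcd c N := Nat.le_mul_of_pos_right _ hd
      have := le_max_left b i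
      omega
    · intro M hM hM1 hMi hdvd
      have hMp : Nat.Coprime M p := by
        apply Nat.Coprime.symm
        rw [hpp.coprime_iff_not_dvd]
        intro h
        have := Nat.le_of_dvd hM1 h
        have := le_max_right b i
        omega
      have h2 : M ∣ Nat.gcd c N := hMp.dvd_of_dvd_mul_left hdvd
      exact hM (hdiv N hN M hM1 (h2.trans (Nat.gcd_dvd_right _ _)))
    · have := Nat.ModEq.mul_right' (Nat.gcd c N) hpm
      rwa [← hc, ← hN'] at this
  by_cases hN : N ∈ A
  · obtain ⟨n, h⟩ := main N hN
    exact ⟨n, h.1, h.2.1, fun _ => h.2.2⟩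
  · obtain ⟨n, h⟩ := main 1 h1
    exact ⟨n, h.1, h.2.1, fun h => absurd h hN⟩

theorem exists_seq (A : Set ℕ) (hA : A ⊆ {N : ℕ | 1 ≤ N}) (h1 : 1 ∈ A)
    (hdiv : ∀ N ∈ A, ∀ m : ℕ, 1 ≤ m → m ∣ N → m ∈ A) :
    ∃ l : ℕ → ℕ, (∀ i, l i + (i + 1) ≤ l (i + 1)) ∧
      (∀ i M, M ∉ A → 1 ≤ M → M ≤ i → ¬ M ∣ l i) ∧
      (∀ N ∈ A, ∀ c b, ∃ i, b ≤ i ∧ l i ≡ c [MOD N]) := by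
  choose g hg1 hg2 hg3 using exists_step A hA h1 hdiv
  let P : ℕ → ℕ × ℕ := fun i => Nat.unpair (Nat.unpair i).1
  let l : ℕ → ℕ := fun i => Nat.rec (g (P 0).1 (P 0).2 0 0)
    (fun i r => g (P (i+1)).1 (P (i+1)).2 (i+1) (r + (i + 1))) i
  have hl : ∀ i, ∃ b, l i = g (P i).1 (P i).2 i b := by
    intro i
    cases i with
    | zero => exact ⟨0, rfl⟩
    | succ i => exact ⟨l i + (i+1), rfl⟩
  refine ⟨l, ?_, ?_, ?_⟩
  · intro i
    exact hg1 (P (i+1)).1 (P (i+1)).2 (i+1) (l i + (i + 1))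
  · intro i
    obtain ⟨b, hb⟩ := hl i
    rw [hb]
    exact hg2 _ _ _ _
  · intro N hN c b
    refine ⟨Nat.pair (Nat.pair N c) b, Nat.right_le_pair _ _, ?_⟩
    obtain ⟨b', hb⟩ := hl (Nat.pair (Nat.pair N c) b)
    rw [hb]
    have hP : P (Nat.pair (Nat.pair N c) b) = (N, c) := by simp [P]
    rw [hP]
    exact hg3 _ _ _ _ hN

/-- basis vector -/
def eV (n : ℕ) : H2 ℂ := lp.single 2 n (1 : ℂ)

theorem eV_apply (n k : ℕ) : eV n k = if n = k then 1 else 0 := by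
  unfold eV
  rw [lp.coeFn_single, Pi.single_apply]
  simp [eq_comm]

theorem eV_norm (n : ℕ) : ‖eV n‖ = 1 := by
  unfold eV
  rw [lp.norm_single (by norm_num)]
  simp

/-- coordinate functional -/
def coordL (n : ℕ) : H2 ℂ →L[ℂ] ℂ :=
  LinearMap.mkContinuous
    { toFun := fun f => f n
      map_add' := fun f g => by simp
      map_smul' := fun c f => by simp } 1
    (fun f => by
      rw [one_mul]
      exact lp.norm_apply_le_norm (by norm_num) f n)

theorem coordL_apply (n : ℕ) (f : H2 ℂ) : coordL n f = f n := rfl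

/-- coefficients -/
def aC (i : ℕ) : ℂ := ((Nat.factorial i : ℝ)⁻¹ : ℝ)

theorem aC_norm (i : ℕ) : ‖aC i‖ = (Nat.factorial i : ℝ)⁻¹ := by
  unfold aC
  rw [Complex.norm_real, Real.norm_of_nonneg (by positivity)]

theorem aC_bound (i k : ℕ) :
    ‖aC (k + (i + 1))‖ ≤ ‖aC i‖ * ((i : ℝ) + 1)⁻¹ * (1 / 2 : ℝ) ^ k := by
  simp only [aC_norm]
  have h := Nat.factorial_mul_pow_le_factorial (m := i + 1) (n := k)
  have h2 : Nat.factorial i * (i + 1) * 2 ^ k ≤ Nat.factorial (k + (i + 1)) := by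
    rw [add_comm k]
    refine le_trans ?_ h
    rw [Nat.factorial_succ, mul_comm (i + 1)]
    gcongr
    omega
  have h3 : (Nat.factorial i : ℝ) * (i + 1) * 2 ^ k ≤ Nat.factorial (k + (i + 1)) := by
    exact_mod_cast h2
  have h4 : (Nat.factorial i : ℝ)⁻¹ * ((i : ℝ) + 1)⁻¹ * (1 / 2 : ℝ) ^ k
      = ((Nat.factorial i : ℝ) * (i + 1) * 2 ^ k)⁻¹ := by
    rw [mul_inv, mul_inv, one_div, inv_pow]
  rw [h4]
  exact inv_anti₀ (by positivity) h3

theorem tail_hasSum (i : ℕ) : HasSum (fun k : ℕ => ‖aC i‖ * ((i : ℝ) + 1)⁻¹ * (1 / 2 : ℝ) ^ k)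
    (‖aC i‖ * ((i : ℝ) + 1)⁻¹ * 2) := hasSum_geometric_two.mul_left _

theorem norm_term (i n : ℕ) : ‖aC i • eV n‖ = ‖aC i‖ := by
  rw [norm_smul, eV_norm, mul_one]

theorem summable_tail (i : ℕ) (r : ℕ → ℕ) :
    Summable (fun k => aC (k + (i + 1)) • eV (r k)) := by
  refine Summable.of_norm_bounded (tail_hasSum i).summable (fun k => ?_)
  rw [norm_term]
  exact aC_bound i k

theorem summable_all (r : ℕ → ℕ) : Summable (fun k => aC k • eV (r k)) := by
  rw [← summable_nat_add_iff 1]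
  exact summable_tail 0 (fun k => r (k + 1))

/-- the function -/
def fL (l : ℕ → ℕ) : H2 ℂ := ∑' i, aC i • eV (l i)

theorem coord_tsum (u : ℕ → H2 ℂ) (hu : Summable u) (n : ℕ) :
    (∑' i, u i : H2 ℂ) n = ∑' i, u i n := by
  rw [← coordL_apply, (coordL n).map_tsum hu]
  rfl

theorem term_apply (i n k : ℕ) : (aC i • eV n : H2 ℂ) k = if n = k then aC i else 0 := by
  rw [lp.coeFn_smul, Pi.smul_apply, eV_apply]
  simp

theorem fL_apply (l : ℕ → ℕ) (n : ℕ) : fL l n = ∑' i, if l i = n then aC i else 0 := by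
  unfold fL
  rw [coord_tsum _ (summable_all l)]
  simp only [term_apply]

theorem shift_fL (l : ℕ → ℕ) (i m : ℕ) (hm : m ≤ l i) (hlt : ∀ j < i, l j < l i - m)
    (hgt : ∀ j, i < j → l i ≤ l j) :
    bshift^[l i - m] (fL l) - aC i • eV m
      = ∑' k, aC (k + (i + 1)) • eV (l (k + (i + 1)) - (l i - m)) := by
  apply lp.ext
  funext n
  rw [lp.coeFn_sub, Pi.sub_apply, bshift_iter_apply, term_apply,
    coord_tsum _ (summable_tail i (fun k => l (k + (i + 1)) - (l i - m))), fL_apply]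
  have hs : Summable (fun j => if l j = n + (l i - m) then aC j else 0) := by
    have h := (coordL (n + (l i - m))).summable (summable_all l)
    simpa only [coordL_apply, term_apply] using h
  rw [← hs.sum_add_tsum_nat_add (i + 1), Finset.sum_range_succ, Finset.sum_eq_zero, zero_add]
  · have e1 : (if l i = n + (l i - m) then aC i else 0) = if m = n then aC i else 0 := by
      congr 1
      apply propext
      omega
    rw [e1, add_sub_cancel_left]
    apply tsum_congr
    intro k
    rw [term_apply]
    congr 1
    apply propext
    have := hgt (k + (i + 1)) (by omega)
    omega
  · intro j hj
    rw [Finset.mem_range] at hj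
    have := hlt j hj
    rw [if_neg]
    omega

theorem shift_bound (l : ℕ → ℕ) (i m : ℕ) (hm : m ≤ l i) (hlt : ∀ j < i, l j < l i - m)
    (hgt : ∀ j, i < j → l i ≤ l j) :
    ‖(aC i)⁻¹ • bshift^[l i - m] (fL l) - eV m‖ ≤ ((i : ℝ) + 1)⁻¹ * 2 := by
  have ha : 0 < ‖aC i‖ := by rw [aC_norm]; positivity
  have ha' : aC i ≠ 0 := norm_pos_iff.1 ha
  have h := tsum_of_norm_bounded (tail_hasSum i)
    (f := fun k => aC (k + (i + 1)) • eV (l (k + (i + 1)) - (l i - m)))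
    (fun k => by rw [norm_term]; exact aC_bound i k)
  rw [← shift_fL l i m hm hlt hgt] at h
  have e : (aC i)⁻¹ • bshift^[l i - m] (fL l) - eV m
      = (aC i)⁻¹ • (bshift^[l i - m] (fL l) - aC i • eV m) := by
    rw [smul_sub, smul_smul, inv_mul_cancel₀ ha', one_smul]
  rw [e, norm_smul, norm_inv, inv_mul_le_iff₀ ha]
  linarith

theorem top_of_eV (E : Submodule ℂ (H2 ℂ)) (hE : IsClosed (E : Set (H2 ℂ)))
    (h : ∀ m, eV m ∈ E) : E = ⊤ := by
  rw [eq_top_iff]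
  intro g _
  have hg : HasSum (fun i : ℕ => (lp.single 2 i (g i) : H2 ℂ)) g :=
    lp.hasSum_single (by norm_num) g
  refine hE.mem_of_tendsto hg (Filter.Eventually.of_forall fun s => ?_)
  refine E.sum_mem fun i _ => ?_
  have : (lp.single 2 i (g i) : H2 ℂ) = g i • eV i := by
    unfold eV
    rw [← lp.single_smul, smul_eq_mul, mul_one]
  rw [this]
  exact E.smul_mem _ (h i)

theorem cyclic_fL (l : ℕ → ℕ) (hgap : ∀ i, l i + (i + 1) ≤ l (i + 1)) (N : ℕ)
    (hN : ∀ c b, ∃ i, b ≤ i ∧ l i ≡ c [MOD N]) : EfPow (fL l) N = ⊤ := by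
  have hmono : Monotone l := monotone_nat_of_le_succ fun i => by have := hgap i; omega
  have hlt : ∀ i j, j < i → l j + i ≤ l i := by
    intro i j hj
    obtain ⟨i, rfl⟩ : ∃ i', i = i' + 1 := ⟨i - 1, by omega⟩
    have := hgap i
    have := hmono (show j ≤ i by omega)
    omega
  apply top_of_eV
  · exact Submodule.isClosed_topologicalClosure _
  · intro m
    change eV m ∈ closure _
    rw [Metric.mem_closure_iff]
    intro ε hε
    obtain ⟨b, hb⟩ := exists_nat_gt (2 / ε)
    obtain ⟨i, hi, hmod⟩ := hN m (max b (m + 1))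
    have hib := (le_max_left _ _).trans hi
    have him := (le_max_right _ _).trans hi
    have hml : m ≤ l i := by
      have := hlt i 0 (by omega)
      omega
    obtain ⟨k, hk⟩ := (Nat.modEq_iff_dvd' hml).1 hmod.symm
    refine ⟨(aC i)⁻¹ • bshift^[l i - m] (fL l), ?_, ?_⟩
    · apply Submodule.smul_mem
      apply Submodule.subset_span
      exact ⟨k, by rw [hk]⟩
    · rw [dist_comm, dist_eq_norm]
      refine (shift_bound l i m hml ?_ ?_).trans_lt ?_
      · intro j hj
        have := hlt i j hj
        omega
      · intro j hj
        exact hmono hj.le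
      · have hbi : (b : ℝ) ≤ i := by exact_mod_cast hib
        have : 2 / ε < (i : ℝ) + 1 := by linarith
        rw [inv_mul_lt_iff₀ (by positivity)]
        rwa [div_lt_iff₀ hε] at this

theorem not_cyclic_fL (l : ℕ → ℕ) (M n : ℕ) (h : ∀ i k, l i ≠ n + M * k) :
    EfPow (fL l) M ≠ ⊤ := by
  intro htop
  have hle : EfPow (fL l) M ≤ (coordL n).ker := by
    apply Submodule.topologicalClosure_minimal
    · rw [Submodule.span_le]
      rintro g ⟨k, rfl⟩
      change coordL n _ = 0
      rw [coordL_apply, bshift_iter_apply, fL_apply]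
      simp [h]
    · exact (coordL n).isClosed_ker
  have h2 : eV n ∈ (coordL n).ker := hle (htop ▸ Submodule.mem_top)
  have h3 : coordL n (eV n) = 0 := h2
  rw [coordL_apply, eV_apply] at h3
  simp at h3

/-- For `A ⊆ ℕ∖{0}` with `1 ∈ A`: `A` is closed under taking divisors iff `A = A(f)` for
some `f ∈ H²`, where `A(f) = {N ≥ 1 : f is cyclic for S*^N}`. -/
theorem divisor_closed_iff_eq_Af
    (A : Set ℕ) (hA : A ⊆ {N : ℕ | 1 ≤ N}) (h1 : 1 ∈ A) :
    (∀ N ∈ A, ∀ m : ℕ, 1 ≤ m → m ∣ N → m ∈ A) ↔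
      ∃ f : H2 ℂ, A = {N : ℕ | 1 ≤ N ∧ EfPow f N = ⊤} := by
  constructor
  · intro hdiv
    obtain ⟨l, hgap, hnd, hhit⟩ := exists_seq A hA h1 hdiv
    refine ⟨fL l, ?_⟩
    ext M
    constructor
    · intro hM
      exact ⟨hA hM, cyclic_fL l hgap M (hhit M hM)⟩
    · rintro ⟨hM1, hM⟩
      by_contra hMA
      have hmono : Monotone l := monotone_nat_of_le_succ fun i => by have := hgap i; omega
      refine not_cyclic_fL l M (M * (l M + 1)) ?_ hM
      intro i k hik
      by_cases hi : M ≤ i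
      · exact hnd i M hMA hM1 hi ⟨l M + 1 + k, by rw [hik]; ring⟩
      · have h2 := hmono (show i ≤ M by omega)
        have h3 : l M + 1 ≤ M * (l M + 1) := Nat.le_mul_of_pos_left _ hM1
        have h4 := Nat.zero_le (M * k)
        omega
  · rintro ⟨f, rfl⟩ N ⟨hN1, hN⟩ m hm ⟨c, rfl⟩
    refine ⟨hm, ?_⟩
    rw [eq_top_iff, ← hN]
    apply Submodule.topologicalClosure_mono
    apply Submodule.span_mono
    rintro g ⟨k, rfl⟩
    exact ⟨c * k, by rw [mul_assoc]⟩

end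
end

section
/- Let d ≥ 1 and let Λ_1, …, Λ_d ⊂ ℕ be arbitrary infinite Hadamard lacunary sets. Then there exists a function ψ = (ψ_1, …, ψ_d) ∈ H²(𝔻, ℂ^d) which is cyclic for the backward shift S* on H²(𝔻, ℂ^d) and satisfies σ(ψ_i) = Λ_i for every 1 ≤ i ≤ d. -/
open scoped InnerProductSpace ENNReal
noncomputable section

variable {X : Type*} [NormedAddCommGroup X] [InnerProductSpace ℂ X]

theorem aux_bshift_iter (f : H2 X) (n k : ℕ) : (bshift^[n] f) k = f (n + k) := by
  induction n generalizing f with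
  | zero => simp
  | succ n ih =>
    rw [Function.iterate_succ_apply, ih]
    show f (n + k + 1) = _
    rw [show n + 1 + k = n + k + 1 by omega]

theorem aux_seq (d : ℕ) (hd : 1 ≤ d) (Λ : Fin d → Set ℕ) (hinf : ∀ i, (Λ i).Infinite) :
    ∃ (n : ℕ → ℕ) (c : ℕ → Fin d), (∀ s, n s ∈ Λ (c s)) ∧ (∀ s, 2 * n s < n (s + 1)) ∧
      ∀ i M, ∃ s, M ≤ s ∧ c s = i := by
  have h : ∀ (i : Fin d) (N : ℕ), ∃ p, p ∈ Λ i ∧ N < p := fun i N => by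
    obtain ⟨p, hp, h2⟩ := (hinf i).exists_gt N
    exact ⟨p, hp, h2⟩
  choose f hf hf' using h
  let c : ℕ → Fin d := fun s => ⟨s % d, Nat.mod_lt _ hd⟩
  let n : ℕ → ℕ := fun s => Nat.rec (f (c 0) 0) (fun s r => f (c (s + 1)) (2 * r)) s
  refine ⟨n, c, ?_, ?_, ?_⟩
  · intro s
    cases s with
    | zero => exact hf _ _
    | succ s => exact hf _ _
  · intro s
    exact hf' (c (s + 1)) (2 * n s)
  · intro i M
    refine ⟨i + d * M, ?_, ?_⟩
    · nlinarith
    · apply Fin.ext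
      show (i + d * M) % d = i
      rw [Nat.add_mul_mod_self_left]
      exact Nat.mod_eq_of_lt i.2

theorem aux_norm_le {d : ℕ} (v : EuclideanSpace ℂ (Fin d)) (B : ℝ) (h : ∀ j, ‖v j‖ ≤ B) :
    ‖v‖ ≤ d * B := by
  have hv : v = ∑ j, EuclideanSpace.single j (v j) := by
    ext i
    simp [Finset.sum_apply, Pi.single_apply]
  calc ‖v‖ = ‖∑ j, EuclideanSpace.single j (v j)‖ := by rw [← hv]
    _ ≤ ∑ j, ‖EuclideanSpace.single j (v j)‖ := norm_sum_le _ _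
    _ ≤ ∑ _j : Fin d, B := Finset.sum_le_sum fun j _ => by simpa using h j
    _ = d * B := by simp

open Classical in
/-- Size of the `j`-th coefficient at position `p`, when it is nonzero. -/
def auxW {d : ℕ} (n : ℕ → ℕ) (c : ℕ → Fin d) (p : ℕ) (j : Fin d) : ℝ :=
  if ∃ s, p = n s ∧ j = c s then (1 / 2 : ℝ) ^ (p ^ 2) else (1 / 2 : ℝ) ^ (8 * p ^ 2)

open Classical in
def auxV {d : ℕ} (Λ : Fin d → Set ℕ) (n : ℕ → ℕ) (c : ℕ → Fin d) (p : ℕ) :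
    EuclideanSpace ℂ (Fin d) :=
  WithLp.toLp 2 fun j => if p ∈ Λ j then (auxW n c p j : ℂ) else 0

theorem auxW_pos {d : ℕ} (n : ℕ → ℕ) (c : ℕ → Fin d) (p : ℕ) (j : Fin d) :
    0 < auxW n c p j := by
  unfold auxW; split_ifs <;> positivity

theorem auxW_le {d : ℕ} (n : ℕ → ℕ) (c : ℕ → Fin d) (p : ℕ) (j : Fin d) :
    auxW n c p j ≤ (1 / 2 : ℝ) ^ p := by
  unfold auxW
  split_ifs <;> apply pow_le_pow_of_le_one (by norm_num) (by norm_num) <;> nlinarith [Nat.le_self_pow (two_ne_zero) p]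

theorem auxV_le {d : ℕ} (Λ : Fin d → Set ℕ) (n : ℕ → ℕ) (c : ℕ → Fin d) (p : ℕ) (j : Fin d) :
    ‖auxV Λ n c p j‖ ≤ auxW n c p j := by
  have := auxW_pos n c p j
  unfold auxV
  simp only
  split_ifs
  · simp [abs_of_pos this]
  · simpa using this.le

theorem aux_key {d : ℕ} (n : ℕ → ℕ) (c : ℕ → Fin d) (hn : ∀ s, 2 * n s < n (s + 1))
    (s p : ℕ) (j : Fin d) (hp : n s ≤ 2 * p) (hne : ¬ (p = n s ∧ j = c s)) :
    auxW n c p j ≤ (1 / 2 : ℝ) ^ (n s ^ 2) * (1 / 2 : ℝ) ^ p := by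
  have hmono : StrictMono n := strictMono_nat_of_lt_succ fun s => by have := hn s; omega
  rw [← pow_add]
  unfold auxW
  split_ifs with h
  · obtain ⟨t, rfl, rfl⟩ := h
    have hts : s < t := by
      rcases lt_trichotomy t s with h | h | h
      · have h1 : n (t + 1) ≤ n s := hmono.monotone h
        have := hn t
        omega
      · subst h; exact absurd ⟨rfl, rfl⟩ hne
      · exact h
    have h1 : n s + 1 ≤ n t := hmono hts
    apply pow_le_pow_of_le_one (by norm_num) (by norm_num)
    nlinarith
  · apply pow_le_pow_of_le_one (by norm_num) (by norm_num)
    nlinarith [Nat.le_self_pow (two_ne_zero) p]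

theorem aux_mem {d : ℕ} (Λ : Fin d → Set ℕ) (n : ℕ → ℕ) (c : ℕ → Fin d) :
    Memℓp (E := fun _ : ℕ => EuclideanSpace ℂ (Fin d)) (auxV Λ n c) 2 := by
  refine Memℓp.of_exponent_ge (q := 1) ?_ (by norm_num)
  apply memℓp_gen
  simp only [ENNReal.toReal_one, Real.rpow_one]
  refine Summable.of_nonneg_of_le (fun _ => norm_nonneg _)
    (fun p => aux_norm_le _ _ fun j => (auxV_le Λ n c p j).trans (auxW_le n c p j)) ?_
  exact (summable_geometric_of_lt_one (by norm_num) (by norm_num)).mul_left _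

theorem aux_est {d : ℕ} (Λ : Fin d → Set ℕ) (n : ℕ → ℕ) (c : ℕ → Fin d)
    (hΛ : ∀ s, n s ∈ Λ (c s)) (hn : ∀ s, 2 * n s < n (s + 1))
    (g : H2 (EuclideanSpace ℂ (Fin d))) (m s : ℕ) (hm : 2 * m ≤ n s)
    (h0 : HasSum (fun k => ⟪auxV Λ n c (n s - m + k), g k⟫_ℂ) 0) :
    ‖g m (c s)‖ ≤ 2 * d * ‖g‖ * (1 / 2 : ℝ) ^ (n s - m) := by
  set N := n s - m with hN
  set w : ℝ := (1 / 2 : ℝ) ^ (n s ^ 2) with hw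
  have hw0 : 0 < w := by positivity
  let e : ℕ → EuclideanSpace ℂ (Fin d) :=
    fun k => if k = m then EuclideanSpace.single (c s) (w : ℂ) else 0
  have hr : ∀ k, ‖auxV Λ n c (N + k) - e k‖ ≤ d * (w * (1 / 2 : ℝ) ^ (N + k)) := by
    intro k
    apply aux_norm_le
    intro j
    by_cases h : k = m ∧ j = c s
    · obtain ⟨rfl, rfl⟩ := h
      have h1 : N + k = n s := by omega
      have h2 : (auxV Λ n c (N + k) - e k) (c s) = 0 := by
        have h3 : ∃ t, n s = n t ∧ c s = c t := ⟨s, rfl, rfl⟩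
        rw [h1]
        simp [e, auxV, auxW, hΛ s, h3, hw]
      rw [h2, norm_zero]; positivity
    · have h2 : (auxV Λ n c (N + k) - e k) j = auxV Λ n c (N + k) j := by
        by_cases hk : k = m
        · have hj : j ≠ c s := fun hj => h ⟨hk, hj⟩
          simp [e, hk, hj]
        · simp [e, hk]
      rw [h2]
      refine (auxV_le _ _ _ _ _).trans (aux_key n c hn s _ j (by omega) ?_)
      rintro ⟨h3, h4⟩
      exact h ⟨by omega, h4⟩
  have h1 : HasSum (fun k => ⟪e k, g k⟫_ℂ) ((w : ℂ) * g m (c s)) := by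
    have : (w : ℂ) * g m (c s) = ⟪e m, g m⟫_ℂ := by
      simp [e, EuclideanSpace.inner_single_left]
    rw [this]
    apply hasSum_single
    intro k hk
    simp [e, hk]
  have h2 := h0.sub h1
  simp only [← inner_sub_left] at h2
  have hgeo : HasSum (fun k : ℕ => d * (w * (1 / 2 : ℝ) ^ N) * ‖g‖ * (1 / 2 : ℝ) ^ k)
      (d * (w * (1 / 2 : ℝ) ^ N) * ‖g‖ * 2) := by
    have := hasSum_geometric_two.mul_left (d * (w * (1 / 2 : ℝ) ^ N) * ‖g‖)
    exact this
  have h3 := tsum_of_norm_bounded hgeo (f := fun k => ⟪auxV Λ n c (N + k) - e k, g k⟫_ℂ) (by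
    intro k
    calc _ ≤ ‖auxV Λ n c (N + k) - e k‖ * ‖g k‖ := norm_inner_le_norm _ _
      _ ≤ (d * (w * (1 / 2 : ℝ) ^ (N + k))) * ‖g‖ := by
        gcongr
        · exact hr k
        · exact lp.norm_apply_le_norm (by norm_num) g k
      _ = _ := by rw [pow_add]; ring)
  rw [h2.tsum_eq, zero_sub, norm_neg, norm_mul, Complex.norm_real, Real.norm_of_nonneg hw0.le] at h3
  have h4 : w * ‖g m (c s)‖ ≤ w * (2 * d * ‖g‖ * (1 / 2 : ℝ) ^ N) := by
    refine h3.trans (le_of_eq ?_); ring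
  exact le_of_mul_le_mul_left h4 hw0

/-- Given arbitrary infinite Hadamard lacunary sets `Λ₁, …, Λ_d`, there is a cyclic function
`ψ = (ψ₁, …, ψ_d) ∈ H²(𝔻, ℂ^d)` with `σ(ψᵢ) = Λᵢ` for every `i`. -/
theorem exists_cyclic_with_prescribed_lacunary_spectra
    (d : ℕ) (hd : 1 ≤ d)
    (Λ : Fin d → Set ℕ) (hlac : ∀ i, HadLac (Λ i)) (hinf : ∀ i, (Λ i).Infinite) :
    ∃ ψ : H2 (EuclideanSpace ℂ (Fin d)),
      Ef ψ = ⊤ ∧ ∀ i : Fin d, {k : ℕ | ψ k i ≠ 0} = Λ i := by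
  obtain ⟨n, c, hΛ, hn, hc⟩ := aux_seq d hd Λ hinf
  refine ⟨⟨auxV Λ n c, aux_mem Λ n c⟩, ?_, ?_⟩
  · have hmono : StrictMono n := strictMono_nat_of_lt_succ fun s => by have := hn s; omega
    unfold Ef EF
    rw [Submodule.topologicalClosure_eq_top_iff, Submodule.eq_bot_iff]
    intro g hg
    rw [Submodule.mem_orthogonal] at hg
    have hz : ∀ N, HasSum (fun k => ⟪auxV Λ n c (N + k), g k⟫_ℂ) 0 := by
      intro N
      have h1 := hg _ (Submodule.subset_span ⟨_, rfl, N, rfl⟩)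
      have h2 := lp.hasSum_inner (𝕜 := ℂ) (bshift^[N] ⟨auxV Λ n c, aux_mem Λ n c⟩) g
      rw [h1] at h2
      simpa only [aux_bshift_iter] using h2
    ext m i
    show g m i = 0
    have hlim : Filter.Tendsto (fun N : ℕ => 2 * d * ‖g‖ * (1 / 2 : ℝ) ^ N) Filter.atTop
        (nhds 0) := by
      have := (tendsto_pow_atTop_nhds_zero_of_lt_one (r := (1 / 2 : ℝ)) (by norm_num)
        (by norm_num)).const_mul (2 * d * ‖g‖)
      simpa using this
    rw [← norm_le_zero_iff]
    refine le_of_forall_pos_le_add fun ε hε => ?_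
    obtain ⟨N₀, hN₀⟩ := Filter.eventually_atTop.1 (hlim.eventually (gt_mem_nhds hε))
    obtain ⟨s, hs, rfl⟩ := hc i (2 * m + N₀)
    have hs' : s ≤ n s := hmono.id_le s
    have h5 := aux_est Λ n c hΛ hn g m s (by omega) (hz _)
    have h6 := hN₀ (n s - m) (by omega)
    linarith
  · intro i
    ext k
    show auxV Λ n c k i ≠ 0 ↔ k ∈ Λ i
    have := (auxW_pos n c k i).ne'
    simp [auxV, this]

end
end

section
/- Let X be a separable Hilbert space, Λ = {n_k : k ≥ 1} an infinite Hadamard lacunary set, and m_1, …, m_d fixed integers. Let f = (f_1, …, f_d) ∈ H²(𝔻, X^d), where X^d is the d-fold Hilbert direct sum of X, and suppose σ(f_i) ⊆ (Λ + m_i) ∩ ℕ for each 1 ≤ i ≤ d. Suppose the sequence of vectors v_k = (f̂_1(n_k + m_1), f̂_2(n_k + m_2), …, f̂_d(n_k + m_d)) ∈ X^d, k ≥ 1, is completely relatively compact in X^d. Then f is cyclic for the backward shift on H²(𝔻, X^d) if and only if for every N ≥ 1 the closed linear span of {v_k : k ≥ N} equals X^d. -/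
open scoped InnerProductSpace ENNReal
noncomputable section

variable {X : Type*} [NormedAddCommGroup X] [InnerProductSpace ℂ X]

lemma bshift_iter_apply_s16 {E : Type*} [NormedAddCommGroup E] [InnerProductSpace ℂ E]
    (f : H2 E) (l j : ℕ) : (bshift^[l] f) j = f (j + l) := by
  induction l generalizing j with
  | zero => rfl
  | succ l ih =>
    rw [Function.iterate_succ_apply']
    change (bshift^[l] f) (j + 1) = _
    rw [ih, show j + 1 + l = j + (l + 1) by omega]

lemma mem_orth_span_iff {E : Type*} [NormedAddCommGroup E] [InnerProductSpace ℂ E]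
    (s : Set E) (g : E) : g ∈ (Submodule.span ℂ s)ᗮ ↔ ∀ x ∈ s, ⟪x, g⟫_ℂ = 0 := by
  constructor
  · intro h x hx
    exact (Submodule.mem_orthogonal _ _).1 h x (Submodule.subset_span hx)
  · intro h
    rw [Submodule.mem_orthogonal]
    intro u hu
    induction hu using Submodule.span_induction with
    | mem x hx => exact h x hx
    | zero => simp
    | add x y _ _ hx hy => rw [inner_add_left, hx, hy, add_zero]
    | smul c x _ hx => rw [inner_smul_left, hx, mul_zero]

lemma Ef_eq_top_iff {E : Type*} [NormedAddCommGroup E] [InnerProductSpace ℂ E] [CompleteSpace E]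
    (f : H2 E) : Ef f = ⊤ ↔ ∀ g : H2 E, (∀ l : ℕ, ⟪bshift^[l] f, g⟫_ℂ = 0) → g = 0 := by
  unfold Ef EF
  rw [Submodule.topologicalClosure_eq_top_iff, Submodule.eq_bot_iff]
  refine forall_congr' fun g => ?_
  rw [mem_orth_span_iff]
  simp

lemma tail_eq_top_iff {E : Type*} [NormedAddCommGroup E] [InnerProductSpace ℂ E] [CompleteSpace E]
    (v : ℕ → E) (N : ℕ) :
    (Submodule.span ℂ {x : E | ∃ k ≥ N, x = v k}).topologicalClosure = ⊤ ↔
      ∀ y : E, (∀ k ≥ N, ⟪v k, y⟫_ℂ = 0) → y = 0 := by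
  rw [Submodule.topologicalClosure_eq_top_iff, Submodule.eq_bot_iff]
  refine forall_congr' fun g => ?_
  rw [mem_orth_span_iff]
  refine imp_congr_left ⟨fun h k hk => h _ ⟨k, hk, rfl⟩, ?_⟩
  rintro h _ ⟨k, hk, rfl⟩
  exact h k hk

/-- Extension of the `i`-th component of the coefficients by zero to `ℤ`. -/
def extZ {E : Type*} [NormedAddCommGroup E] [InnerProductSpace ℂ E] {d : ℕ}
    (g : H2 (PiLp 2 fun _ : Fin d => E)) (i : Fin d) (q : ℤ) : E :=
  if 0 ≤ q then g q.toNat i else 0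

lemma extZ_natCast {E : Type*} [NormedAddCommGroup E] [InnerProductSpace ℂ E] {d : ℕ}
    (g : H2 (PiLp 2 fun _ : Fin d => E)) (i : Fin d) (q : ℕ) : extZ g i q = g q i := by
  simp [extZ]

lemma extZ_neg {E : Type*} [NormedAddCommGroup E] [InnerProductSpace ℂ E] {d : ℕ}
    (g : H2 (PiLp 2 fun _ : Fin d => E)) (i : Fin d) (q : ℤ) (hq : q < 0) : extZ g i q = 0 := by
  simp [extZ, hq]

lemma summable_sq_extZ {E : Type*} [NormedAddCommGroup E] [InnerProductSpace ℂ E] {d : ℕ}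
    (g : H2 (PiLp 2 fun _ : Fin d => E)) (i : Fin d) : Summable fun q : ℤ => ‖extZ g i q‖ ^ 2 := by
  have h : Summable fun n : ℕ => ‖g n‖ ^ 2 := by
    have := (memℓp_gen_iff (by norm_num)).1 (lp.memℓp g)
    simpa using this
  have hi : Summable fun n : ℕ => ‖g n i‖ ^ 2 := by
    refine Summable.of_nonneg_of_le (fun _ => by positivity) (fun n => ?_) h
    gcongr
    exact PiLp.norm_apply_le (g n) i
  have hinj : Function.Injective (fun n : ℕ => (n : ℤ)) := Nat.cast_injective
  refine (hinj.summable_iff ?_).1 ?_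
  · intro q hq
    have : q < 0 := by
      by_contra hh
      exact hq ⟨q.toNat, by simp; omega⟩
    simp [extZ_neg g i q this]
  · refine hi.congr fun n => ?_
    simp [extZ_natCast]

/-- Realigned coefficients: `(reZ g m p)_i = g_i(p + m_i)`. -/
def reZ {E : Type*} [NormedAddCommGroup E] [InnerProductSpace ℂ E] {d : ℕ}
    (g : H2 (PiLp 2 fun _ : Fin d => E)) (m : Fin d → ℤ) (p : ℤ) : PiLp 2 fun _ : Fin d => E :=
  WithLp.toLp 2 fun i => extZ g i (p + m i)

lemma summable_sq_reZ {E : Type*} [NormedAddCommGroup E] [InnerProductSpace ℂ E] {d : ℕ}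
    (g : H2 (PiLp 2 fun _ : Fin d => E)) (m : Fin d → ℤ) :
    Summable fun q : ℤ => ‖reZ g m q‖ ^ 2 := by
  simp_rw [PiLp.norm_sq_eq_of_L2]
  refine summable_sum fun i _ => ?_
  exact (summable_sq_extZ g i).comp_injective (add_left_injective (m i))

lemma summable_inner_of_sq {ι E : Type*} [NormedAddCommGroup E] [InnerProductSpace ℂ E]
    {a b : ι → E} (ha : Summable fun i => ‖a i‖ ^ 2) (hb : Summable fun i => ‖b i‖ ^ 2) :
    Summable fun i => ⟪a i, b i⟫_ℂ := by
  refine Summable.of_norm_bounded (ha.add hb) fun i => ?_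
  refine (norm_inner_le_norm _ _).trans ?_
  nlinarith [sq_nonneg (‖a i‖ - ‖b i‖), sq_nonneg (‖a i‖), sq_nonneg (‖b i‖)]

/-- The orthogonality relation, rewritten along the lacunary set. -/
lemma hasSum_realign {E : Type*} [NormedAddCommGroup E] [InnerProductSpace ℂ E] {d : ℕ}
    (n : ℕ → ℕ) (hmono : StrictMono n) (m : Fin d → ℤ)
    (f g : H2 (PiLp 2 fun _ : Fin d => E))
    (hspec : ∀ (i : Fin d) (k : ℕ), f k i ≠ 0 → ∃ j : ℕ, (k : ℤ) = (n j : ℤ) + m i) (l : ℕ) :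
    HasSum (fun k : ℕ => ⟪reZ f m (n k), reZ g m (n k - l)⟫_ℂ) ⟪bshift^[l] f, g⟫_ℂ := by
  have key : ∀ i, Summable fun q : ℤ => ⟪extZ f i q, extZ g i (q - l)⟫_ℂ := fun i =>
    summable_inner_of_sq (summable_sq_extZ f i)
      ((summable_sq_extZ g i).comp_injective (sub_left_injective (b := (l : ℤ))))
  -- along the lacunary set
  have h1 : ∀ i, HasSum (fun k : ℕ => ⟪extZ f i (n k + m i), extZ g i (n k - l + m i)⟫_ℂ)
      (∑' q : ℤ, ⟪extZ f i q, extZ g i (q - l)⟫_ℂ) := by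
    intro i
    have hinj : Function.Injective fun k : ℕ => (n k : ℤ) + m i := fun a b h => by
      apply hmono.injective
      have : (n a : ℤ) + m i = n b + m i := h
      omega
    have := (hinj.hasSum_iff (f := fun q : ℤ => ⟪extZ f i q, extZ g i (q - l)⟫_ℂ) ?_).2
      (key i).hasSum
    · refine this.congr_fun fun k => ?_
      simp only [Function.comp]
      congr 2
      ring
    · intro q hq
      by_cases h0 : q < 0
      · simp [extZ_neg f i q h0]
      lift q to ℕ using not_lt.1 h0
      rw [extZ_natCast]
      by_cases hf : f q i = 0
      · simp [hf]
      · obtain ⟨j, hj⟩ := hspec i q hf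
        exact absurd ⟨j, hj.symm⟩ hq
  have h2 : ∀ i, HasSum (fun j : ℕ => ⟪f (j + l) i, g j i⟫_ℂ)
      (∑' q : ℤ, ⟪extZ f i q, extZ g i (q - l)⟫_ℂ) := by
    intro i
    have hinj : Function.Injective fun j : ℕ => ((j + l : ℕ) : ℤ) := fun a b h => by
      simpa using h
    have := (hinj.hasSum_iff (f := fun q : ℤ => ⟪extZ f i q, extZ g i (q - l)⟫_ℂ) ?_).2
      (key i).hasSum
    · refine this.congr_fun fun k => ?_
      simp only [Function.comp]
      rw [extZ_natCast, show ((k + l : ℕ) : ℤ) - l = (k : ℕ) by push_cast; ring, extZ_natCast]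
    · intro q hq
      have : q - l < 0 := by
        by_contra hh
        exact hq ⟨(q - l).toNat, by simp only; omega⟩
      simp [extZ_neg g i _ this]
  have h1' := hasSum_sum (s := Finset.univ) fun i _ => h1 i
  have h2' := hasSum_sum (s := Finset.univ) fun i _ => h2 i
  have h3 := lp.hasSum_inner (𝕜 := ℂ) (bshift^[l] f) g
  simp_rw [bshift_iter_apply_s16, PiLp.inner_apply] at h3
  rw [h3.unique h2']
  simpa [PiLp.inner_apply, reZ] using h1'

/-- Bounded multiplicity of differences of a lacunary sequence. -/
lemma lacunary_inj (n : ℕ → ℕ) (c : ℝ) (hc : 1 < c) (hmono : StrictMono n)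
    (hlac : ∀ k, c * n k ≤ n (k + 1)) :
    ∃ L : ℕ, 0 < L ∧ ∀ k j k' j' : ℕ, k < j → k' < j' → (n j : ℤ) - n k = n j' - n k' →
      j % L = j' % L → j = j' ∧ k = k' := by
  have hpow : ∀ r k, c ^ r * n k ≤ n (k + r) := by
    intro r
    induction r with
    | zero => intro k; simp
    | succ r ih =>
      intro k
      calc c ^ (r + 1) * n k = c * (c ^ r * n k) := by ring
        _ ≤ c * n (k + r) := by gcongr; exact ih k
        _ ≤ _ := hlac _
  obtain ⟨L, hL⟩ := pow_unbounded_of_one_lt (c / (c - 1)) hc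
  have hc1 : 0 < c - 1 := by linarith
  have hL0 : 0 < L := by
    rcases Nat.eq_zero_or_pos L with h | h
    · subst h
      rw [pow_zero, div_lt_one hc1] at hL
      linarith
    · exact h
  have main : ∀ k j k' j' : ℕ, k < j → k' < j' → (n j : ℤ) - n k = n j' - n k' →
      j % L = j' % L → ¬ j < j' := by
    intro k j k' j' hk hk' he hm hlt
    have hr : j + L ≤ j' := by
      have h1 : (j' - j) % L = 0 := Nat.sub_mod_eq_zero_of_mod_eq hm.symm
      have := Nat.le_of_dvd (by omega) (Nat.dvd_of_mod_eq_zero h1)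
      omega
    have hb : c * n k' ≤ n j' := (hlac k').trans (by exact_mod_cast hmono.monotone hk')
    have ha : c ^ L * n j ≤ n j' := (hpow L j).trans (by exact_mod_cast hmono.monotone hr)
    have hj : 0 < n j := by have := hmono hk; omega
    have hj' : (0 : ℝ) < n j := by exact_mod_cast hj
    have he' : (n j : ℝ) - n k = n j' - n k' := by exact_mod_cast he
    have hk0 : (0 : ℝ) ≤ n k := by positivity
    rw [div_lt_iff₀ hc1] at hL
    have e1 : c * (n j : ℝ) ≥ (c - 1) * n j' := by nlinarith
    have e2 : (c - 1) * (c ^ L * n j) ≤ (c - 1) * n j' := by gcongr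
    nlinarith
  refine ⟨L, hL0, fun k j k' j' hk hk' he hm => ?_⟩
  have h : j = j' := by
    have a1 := main k j k' j' hk hk' he hm
    have a2 := main k' j' k j hk' hk he.symm hm.symm
    omega
  subst h
  exact ⟨rfl, hmono.injective (by omega)⟩

lemma summable_pairs (n : ℕ → ℕ) (c : ℝ) (hc : 1 < c) (hmono : StrictMono n)
    (hlac : ∀ k, c * n k ≤ n (k + 1)) (G : ℤ → ℝ) (hG0 : ∀ q, 0 ≤ G q) (hG : Summable G) (p : ℤ) :
    Summable fun x : ℕ × ℕ => G (n (x.2 + (x.1 + 1)) - n x.1 + p) := by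
  obtain ⟨L, hL0, hL⟩ := lacunary_inj n c hc hmono hlac
  have hs : Summable fun x : ℤ × Fin L => G x.1 * (1 : ℝ) :=
    hG.mul_of_nonneg (g := fun _ : Fin L => (1 : ℝ)) (Summable.of_finite) hG0 (fun _ => zero_le_one)
  have hinj : Function.Injective fun x : ℕ × ℕ =>
      (((n (x.2 + (x.1 + 1)) : ℤ) - n x.1 + p, ⟨(x.2 + (x.1 + 1)) % L, Nat.mod_lt _ hL0⟩) :
        ℤ × Fin L) := by
    rintro ⟨k, r⟩ ⟨k', r'⟩ h
    simp only [Prod.mk.injEq, Fin.mk.injEq] at h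
    have := hL k (r + (k + 1)) k' (r' + (k' + 1)) (by omega) (by omega) (by omega) h.2
    ext <;> simp <;> omega
  refine (hs.comp_injective hinj).congr fun x => ?_
  simp

lemma gap_tendsto (n : ℕ → ℕ) (c : ℝ) (hc : 1 < c) (hmono : StrictMono n)
    (hlac : ∀ k, c * n k ≤ n (k + 1)) (B : ℕ) :
    ∃ K, ∀ k ≥ K, B ≤ n k ∧ ∀ j < k, n j + B ≤ n k := by
  have hc1 : 0 < c - 1 := by linarith
  obtain ⟨K, hK⟩ := exists_nat_gt (B / (c - 1))
  rw [div_lt_iff₀ hc1] at hK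
  refine ⟨max (K + 1) B, fun k hk => ⟨(le_trans (le_max_right _ _) hk).trans hmono.le_apply, ?_⟩⟩
  intro j hj
  obtain ⟨k, rfl⟩ : ∃ k', k = k' + 1 := ⟨k - 1, by omega⟩
  have h1 : n j ≤ n k := hmono.monotone (by omega)
  have h2 : K ≤ n k := le_trans (by have := le_trans (le_max_left _ _) hk; omega) hmono.le_apply
  have h3 := hlac k
  have h2' : (K : ℝ) ≤ n k := by exact_mod_cast h2
  have h4 : ((n k + B : ℕ) : ℝ) ≤ n (k + 1) := by
    push_cast
    nlinarith
  have h5 : n k + B ≤ n (k + 1) := by exact_mod_cast h4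
  omega

/-- Abel–Dini type lemma. -/
lemma abel_dini (b S : ℕ → ℝ) (hb0 : ∀ k, 0 ≤ b k) (hb : Summable b) (hS0 : ∀ k, 0 ≤ S k)
    (hS : Summable S) (K : ℕ) (h : ∀ k ≥ K, b k ≤ (∑' r, b (r + (k + 1))) * S k) :
    ∃ N, ∀ k ≥ N, b k = 0 := by
  have ht := (tendsto_sum_nat_add S).eventually (gt_mem_nhds (zero_lt_one))
  obtain ⟨N0, hN0⟩ := ht.exists_forall_of_atTop
  set N := max N0 K with hN
  have hSN : ∑' k, S (k + N) < 1 := hN0 N (le_max_left _ _)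
  set T := ∑' k, b (k + N) with hT
  have hbs : ∀ k, Summable fun r => b (r + k) := fun k => (summable_nat_add_iff k).2 hb
  have hSs : Summable fun r => S (r + N) := (summable_nat_add_iff N).2 hS
  have hTk : ∀ k, ∑' r, b (r + (k + N + 1)) ≤ T := by
    intro k
    have := (hbs N).sum_add_tsum_nat_add (k + 1)
    have h0 : 0 ≤ ∑ i ∈ Finset.range (k + 1), b (i + N) := Finset.sum_nonneg fun _ _ => hb0 _
    have e : ∀ r, b (r + (k + N + 1)) = b (r + (k + 1) + N) := fun r => by congr 1; ring
    simp_rw [e]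
    linarith
  have hle : T ≤ T * ∑' k, S (k + N) := by
    rw [← tsum_mul_left]
    refine (hbs N).tsum_le_tsum (fun k => ?_) (hSs.mul_left T)
    refine (h (k + N) (le_trans (le_max_right _ _) (Nat.le_add_left _ _))).trans ?_
    exact mul_le_mul_of_nonneg_right (hTk k) (hS0 _)
  have hT0 : 0 ≤ T := tsum_nonneg fun _ => hb0 _
  have hTz : T = 0 := by nlinarith
  refine ⟨N, fun k hk => ?_⟩
  have := (hbs N).le_tsum (k - N) fun _ _ => hb0 _
  simp only [Nat.sub_add_cancel hk] at this
  exact le_antisymm (this.trans hTz.le) (hb0 k)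

lemma cs_tsum {E : Type*} [NormedAddCommGroup E] [InnerProductSpace ℂ E] {a b : ℕ → E}
    (ha : Summable fun i => ‖a i‖ ^ 2) (hb : Summable fun i => ‖b i‖ ^ 2) :
    ‖∑' i, ⟪a i, b i⟫_ℂ‖ ^ 2 ≤ (∑' i, ‖a i‖ ^ 2) * ∑' i, ‖b i‖ ^ 2 := by
  let A : H2 E := ⟨a, memℓp_gen (by simpa using ha)⟩
  let B : H2 E := ⟨b, memℓp_gen (by simpa using hb)⟩
  have h1 : ⟪A, B⟫_ℂ = ∑' i, ⟪a i, b i⟫_ℂ := lp.inner_eq_tsum A B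
  have h2 : ∀ C : H2 E, ‖C‖ ^ 2 = ∑' i, ‖C i‖ ^ 2 := fun C => by
    have := lp.norm_rpow_eq_tsum (p := 2) (by norm_num) C
    simpa using this
  have h3 : ∑' i, ‖a i‖ ^ 2 = ‖A‖ ^ 2 := (h2 A).symm
  have h4 : ∑' i, ‖b i‖ ^ 2 = ‖B‖ ^ 2 := (h2 B).symm
  rw [← h1, h3, h4, ← mul_pow]
  gcongr
  exact norm_inner_le_norm A B

lemma forward_dir {E : Type*} [NormedAddCommGroup E] [InnerProductSpace ℂ E] {d : ℕ}
    (n : ℕ → ℕ) (hmono : StrictMono n) (m : Fin d → ℤ)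
    (f : H2 (PiLp 2 fun _ : Fin d => E))
    (hspec : ∀ (i : Fin d) (k : ℕ), f k i ≠ 0 → ∃ j : ℕ, (k : ℤ) = (n j : ℤ) + m i)
    (hcyc : ∀ g, (∀ l : ℕ, ⟪bshift^[l] f, g⟫_ℂ = 0) → g = 0)
    (N : ℕ) (y : PiLp 2 fun _ : Fin d => E) (hy : ∀ k ≥ N, ⟪reZ f m (n k), y⟫_ℂ = 0) : y = 0 := by
  classical
  let M : ℕ := n N + ∑ i, (m i).natAbs
  have hM : ∀ i, 0 ≤ (M : ℤ) + m i := by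
    intro i
    have : (m i).natAbs ≤ ∑ i, (m i).natAbs :=
      Finset.single_le_sum (f := fun i => (m i).natAbs) (fun _ _ => Nat.zero_le _)
        (Finset.mem_univ i)
    simp only [M]
    omega
  let g : H2 (PiLp 2 fun _ : Fin d => E) :=
    ∑ i, lp.single 2 ((M : ℤ) + m i).toNat (WithLp.toLp 2 (Pi.single i (y i)))
  have hg : ∀ h : H2 (PiLp 2 fun _ : Fin d => E),
      ⟪h, g⟫_ℂ = ∑ i, ⟪h ((M : ℤ) + m i).toNat i, y i⟫_ℂ := by
    intro h
    simp only [g]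
    rw [inner_sum]
    refine Finset.sum_congr rfl fun i _ => ?_
    rw [lp.inner_single_right, PiLp.inner_apply, Finset.sum_eq_single i]
    · simp
    · intro j _ hj
      simp [Pi.single_eq_of_ne hj]
    · simp
  have hg0 : g = 0 := by
    apply hcyc
    intro l
    rw [hg]
    simp_rw [bshift_iter_apply_s16]
    by_cases hl : ∃ k, n k = M + l
    · obtain ⟨k, hk⟩ := hl
      have hkN : k ≥ N := by
        refine hmono.le_iff_le.1 ?_
        simp only [M] at hk
        omega
      have := hy k hkN
      rw [PiLp.inner_apply] at this
      rw [← this]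
      refine Finset.sum_congr rfl fun i _ => ?_
      have e : (n k : ℤ) + m i = ((((M : ℤ) + m i).toNat + l : ℕ) : ℤ) := by
        have := hM i
        omega
      simp only [reZ]
      rw [e, extZ_natCast]
    · refine Finset.sum_eq_zero fun i _ => ?_
      have : f (((M : ℤ) + m i).toNat + l) i = 0 := by
        by_contra hne
        obtain ⟨j, hj⟩ := hspec i _ hne
        refine hl ⟨j, ?_⟩
        have := hM i
        omega
      simp [this]
  ext i
  have h1 := hg (lp.single 2 ((M : ℤ) + m i).toNat (WithLp.toLp 2 (Pi.single i (y i))))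
  rw [hg0, inner_zero_right, Finset.sum_eq_single i] at h1
  · simpa using h1.symm
  · intro j _ hj
    by_cases h : ((M : ℤ) + m j).toNat = ((M : ℤ) + m i).toNat
    · rw [h]
      simp [hj]
    · rw [lp.single_apply_ne _ _ _ h]
      simp
  · simp

lemma compact_lower {Y : Type*} [NormedAddCommGroup Y] [InnerProductSpace ℂ Y] [CompleteSpace Y]
    (a : ℕ → Y) (ha : CRC a) (G : ℤ → Y) (Z : Submodule ℂ Y)
    (hZ : Z = (Submodule.span ℂ (Set.range G)).topologicalClosure) [Z.HasOrthogonalProjection] :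
    ∃ (t : Finset ℤ) (δ : ℝ), 0 < δ ∧
      ∀ k, δ * ‖Z.starProjection (a k)‖ ^ 2 ≤ ∑ p ∈ t, ‖⟪Z.starProjection (a k), G p⟫_ℂ‖ ^ 2 := by
  have hP : IsOrthoProj Z.starProjection :=
    ⟨fun x => Submodule.starProjection_eq_self_iff.2 (Submodule.starProjection_apply_mem Z x),
      fun x y => Submodule.inner_starProjection_left_eq_right Z x y⟩
  have hK := ha _ hP
  set A := {v : Y | ∃ k, Z.starProjection (a k) ≠ 0 ∧
    v = ‖Z.starProjection (a k)‖⁻¹ • Z.starProjection (a k)} with hA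
  have hZc : IsClosed (Z : Set Y) := by
    rw [hZ]; exact Submodule.isClosed_topologicalClosure _
  have hAs : closure A ⊆ (Z : Set Y) ∩ Metric.sphere 0 1 := by
    refine closure_minimal ?_ (hZc.inter Metric.isClosed_sphere)
    rintro _ ⟨k, hk, rfl⟩
    refine ⟨?_, ?_⟩
    · have := Z.smul_mem ((‖Z.starProjection (a k)‖⁻¹ : ℝ) : ℂ)
        (Submodule.starProjection_apply_mem Z (a k))
      rwa [Complex.coe_smul] at this
    · rw [mem_sphere_zero_iff_norm, norm_smul, norm_inv, norm_norm,
        inv_mul_cancel₀ (norm_ne_zero_iff.2 hk)]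
  have hcov : closure A ⊆ ⋃ p : ℤ, {u : Y | ⟪u, G p⟫_ℂ ≠ 0} := by
    intro u hu
    by_contra hcon
    simp only [Set.mem_iUnion, Set.mem_ofPred_eq, not_exists, not_not] at hcon
    obtain ⟨huZ, hu1⟩ := hAs hu
    have h1 : u ∈ (Submodule.span ℂ (Set.range G))ᗮ := by
      rw [mem_orth_span_iff]
      rintro _ ⟨p, rfl⟩
      rw [← inner_conj_symm, hcon p, map_zero]
    rw [← Submodule.orthogonal_closure, ← hZ] at h1
    have h2 : ⟪u, u⟫_ℂ = 0 := (Submodule.mem_orthogonal _ _).1 h1 u huZ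
    rw [inner_self_eq_zero] at h2
    simp [h2] at hu1
  have hopen : ∀ p : ℤ, IsOpen {u : Y | ⟪u, G p⟫_ℂ ≠ 0} := fun p =>
    isOpen_ne_fun (by fun_prop) continuous_const
  obtain ⟨t, ht⟩ := hK.elim_finite_subcover _ hopen hcov
  have hcont : Continuous fun u : Y => ∑ p ∈ t, ‖⟪u, G p⟫_ℂ‖ ^ 2 := by fun_prop
  have hδ : ∃ δ : ℝ, 0 < δ ∧ ∀ u ∈ closure A, δ ≤ ∑ p ∈ t, ‖⟪u, G p⟫_ℂ‖ ^ 2 := by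
    rcases (closure A).eq_empty_or_nonempty with he | hne
    · exact ⟨1, one_pos, by simp [he]⟩
    · obtain ⟨u, hu, hmin⟩ := hK.exists_isMinOn hne hcont.continuousOn
      refine ⟨_, ?_, fun w hw => hmin hw⟩
      have := ht hu
      simp only [Set.mem_iUnion, Set.mem_ofPred_eq] at this
      obtain ⟨p, hp, hpu⟩ := this
      exact Finset.sum_pos' (fun _ _ => by positivity) ⟨p, hp, by positivity⟩
  obtain ⟨δ, hδ0, hδ⟩ := hδ
  refine ⟨t, δ, hδ0, fun k => ?_⟩
  by_cases hk : Z.starProjection (a k) = 0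
  · simp [hk]
  · have h1 := hδ _ (subset_closure ⟨k, hk, rfl⟩)
    have hpos : 0 < ‖Z.starProjection (a k)‖ := norm_pos_iff.2 hk
    have h2 : ∀ p, ‖⟪‖Z.starProjection (a k)‖⁻¹ • Z.starProjection (a k), G p⟫_ℂ‖ ^ 2 =
        (‖Z.starProjection (a k)‖ ^ 2)⁻¹ * ‖⟪Z.starProjection (a k), G p⟫_ℂ‖ ^ 2 := by
      intro p
      rw [← Complex.coe_smul, inner_smul_left, norm_mul, mul_pow]
      simp
    simp_rw [h2] at h1
    rw [← Finset.mul_sum, inv_mul_eq_div, le_div_iff₀ (by positivity)] at h1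
    exact h1

lemma backward_dir {E : Type*} [NormedAddCommGroup E] [InnerProductSpace ℂ E] [CompleteSpace E]
    {d : ℕ} (n : ℕ → ℕ) (c : ℝ) (hc : 1 < c) (hmono : StrictMono n)
    (hlac : ∀ k, c * n k ≤ n (k + 1)) (m : Fin d → ℤ)
    (f : H2 (PiLp 2 fun _ : Fin d => E))
    (hspec : ∀ (i : Fin d) (k : ℕ), f k i ≠ 0 → ∃ j : ℕ, (k : ℤ) = (n j : ℤ) + m i)
    (hcrc : CRC fun k => reZ f m (n k))
    (htail : ∀ N : ℕ, ∀ y : PiLp 2 fun _ : Fin d => E,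
      (∀ k ≥ N, ⟪reZ f m (n k), y⟫_ℂ = 0) → y = 0)
    (g : H2 (PiLp 2 fun _ : Fin d => E)) (hg : ∀ l : ℕ, ⟪bshift^[l] f, g⟫_ℂ = 0) : g = 0 := by
  set v := fun k => reZ f m (n k) with hv
  set G := reZ g m with hG
  let Z := (Submodule.span ℂ (Set.range G)).topologicalClosure
  have hGZ : ∀ p, Z.starProjection (G p) = G p := fun p =>
    Submodule.starProjection_eq_self_iff.2
      (Submodule.le_topologicalClosure _ (Submodule.subset_span ⟨p, rfl⟩))
  set a := fun k => Z.starProjection (v k) with ha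
  have hav : ∀ k p, ⟪a k, G p⟫_ℂ = ⟪v k, G p⟫_ℂ := fun k p => by
    simp only [a]
    rw [Submodule.inner_starProjection_left_eq_right, hGZ]
  have hvs : Summable fun k => ‖v k‖ ^ 2 :=
    (summable_sq_reZ f m).comp_injective
      (fun x y h => hmono.injective (Nat.cast_injective (R := ℤ) h) :
        Function.Injective fun k : ℕ => (n k : ℤ))
  have has : Summable fun k => ‖a k‖ ^ 2 := by
    refine Summable.of_nonneg_of_le (fun _ => by positivity) (fun k => ?_) hvs
    gcongr
    exact Submodule.norm_starProjection_apply_le Z (v k)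
  have hGs : Summable fun q => ‖G q‖ ^ 2 := summable_sq_reZ g m
  have hpairs : ∀ p : ℤ, Summable fun x : ℕ × ℕ => ‖G (n (x.2 + (x.1 + 1)) - n x.1 + p)‖ ^ 2 :=
    summable_pairs n c hc hmono hlac (fun q => ‖G q‖ ^ 2) (fun q => by positivity) hGs
  -- the basic estimate
  have hest : ∀ p : ℤ, ∃ K, ∀ k ≥ K, ‖⟪a k, G p⟫_ℂ‖ ^ 2 ≤
      (∑' r, ‖a (r + (k + 1))‖ ^ 2) * ∑' r, ‖G (n (r + (k + 1)) - n k + p)‖ ^ 2 := by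
    intro p
    obtain ⟨K, hK⟩ := gap_tendsto n c hc hmono hlac (p.natAbs + ∑ i, (m i).natAbs + 1)
    refine ⟨K, fun k hk => ?_⟩
    obtain ⟨hk1, hk2⟩ := hK k hk
    have hsum := hasSum_realign n hmono m f g hspec (n k - p).toNat
    rw [hg] at hsum
    have e : (((n k : ℤ) - p).toNat : ℤ) = n k - p := by omega
    rw [e] at hsum
    have hsum' : HasSum (fun j => ⟪a j, G (n j - n k + p)⟫_ℂ) 0 := by
      refine hsum.congr_fun fun j => ?_
      rw [hav, show (n j : ℤ) - n k + p = n j - (n k - p) by ring]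
    have hsplit := hsum'.summable.sum_add_tsum_nat_add (k + 1)
    rw [hsum'.tsum_eq, Finset.sum_range_succ, Finset.sum_eq_zero, zero_add, sub_self, zero_add]
      at hsplit
    · rw [eq_neg_of_add_eq_zero_left hsplit, norm_neg]
      have q1 : Summable fun r => ‖a (r + (k + 1))‖ ^ 2 :=
        (summable_nat_add_iff (f := fun k => ‖a k‖ ^ 2) (k + 1)).2 has
      have q2 : Summable fun r => ‖G (n (r + (k + 1)) - n k + p)‖ ^ 2 := (hpairs p).prod_factor k
      exact cs_tsum q1 q2
    · intro j hj
      have hj' := hk2 j (Finset.mem_range.1 hj)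
      have : G ((n j : ℤ) - n k + p) = 0 := by
        ext i
        have hm : (m i).natAbs ≤ ∑ i, (m i).natAbs :=
          Finset.single_le_sum (f := fun i => (m i).natAbs) (fun _ _ => Nat.zero_le _)
            (Finset.mem_univ i)
        simp only [hG, reZ]
        rw [extZ_neg _ _ _ (by omega)]
        simp
      rw [this, inner_zero_right]
  obtain ⟨t, δ, hδ, hlow⟩ := compact_lower v hcrc G Z rfl
  choose K hK using hest
  obtain ⟨N, hN⟩ := abel_dini (fun k => ‖a k‖ ^ 2)
    (fun k => δ⁻¹ * ∑ p ∈ t, ∑' r, ‖G (n (r + (k + 1)) - n k + p)‖ ^ 2)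
    (fun k => by positivity) has
    (fun k => mul_nonneg (by positivity)
      (Finset.sum_nonneg fun p _ => tsum_nonneg fun r => by positivity))
    ((summable_sum fun p _ => (hpairs p).prod).mul_left _) (t.sup K) (fun k hk => by
      have h1 := hlow k
      have h2 : ∑ p ∈ t, ‖⟪a k, G p⟫_ℂ‖ ^ 2 ≤ ∑ p ∈ t, (∑' r, ‖a (r + (k + 1))‖ ^ 2) *
          ∑' r, ‖G (n (r + (k + 1)) - n k + p)‖ ^ 2 :=
        Finset.sum_le_sum fun p hp => hK p k ((Finset.le_sup hp).trans hk)
      rw [← Finset.mul_sum] at h2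
      have h3 := h1.trans h2
      rw [mul_left_comm, le_inv_mul_iff₀ hδ]
      exact h3)
  have hGz : ∀ p, G p = 0 := fun p => htail N _ fun k hk => by
    have h0 : a k = 0 := by simpa using hN k hk
    change ⟪v k, G p⟫_ℂ = 0
    rw [← hav, h0, inner_zero_left]
  ext j i
  have := congrArg (fun x => x i) (hGz (j - m i))
  simpa [hG, reZ, extZ_natCast] using this

/-- Cyclicity criterion for `f = (f₁, …, f_d) ∈ H²(𝔻, X^d)` with `σ(fᵢ) ⊆ (Λ + mᵢ) ∩ ℕ`,
`Λ = {nₖ}` lacunary: if the sequence `vₖ = (f̂₁(nₖ+m₁), …, f̂_d(nₖ+m_d))` is c.r.c. in `X^d`,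
then `f` is cyclic iff `closed-span {vₖ : k ≥ N} = X^d` for every `N`. -/
theorem shifted_lacunary_cyclic_iff {X : Type*} [NormedAddCommGroup X] [InnerProductSpace ℂ X] [CompleteSpace X]
    [TopologicalSpace.SeparableSpace X]
    (d : ℕ) (hd : 1 ≤ d)
    (n : ℕ → ℕ) (c : ℝ) (hc : 1 < c) (hmono : StrictMono n)
    (hlac : ∀ k, c * n k ≤ n (k + 1))
    (m : Fin d → ℤ)
    (f : H2 (PiLp 2 fun _ : Fin d => X))
    (hspec : ∀ (i : Fin d) (k : ℕ), f k i ≠ 0 → ∃ j : ℕ, (k : ℤ) = (n j : ℤ) + m i)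
    (v : ℕ → PiLp 2 fun _ : Fin d => X)
    (hv : ∀ (k : ℕ) (i : Fin d),
      v k i = if 0 ≤ (n k : ℤ) + m i then f ((n k : ℤ) + m i).toNat i else 0)
    (hcrc : CRC v) :
    Ef f = ⊤ ↔
      ∀ N : ℕ,
        (Submodule.span ℂ {x : PiLp 2 fun _ : Fin d => X |
            ∃ k ≥ N, x = v k}).topologicalClosure = ⊤ := by
  have hvr : v = fun k => reZ f m (n k) := by
    funext k
    ext i
    rw [hv]
    rfl
  subst hvr
  rw [Ef_eq_top_iff]
  simp_rw [tail_eq_top_iff]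
  constructor
  · intro h N y hy
    exact forward_dir n hmono m f hspec h N y hy
  · intro h g hg
    exact backward_dir n c hc hmono hlac m f hspec hcrc h g hg

end
end
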